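/- arXiv:2108.10502 — 2 statements merged into one kernel-verified Lean document; each statement's English description precedes it below -/
import Mathlib

section
/- Convex envelope of the sum of an integrally convex and a separable convex function: if f: ℤⁿ → ℝ ∪ {+∞} is integrally convex and Φ: ℤⁿ → ℝ ∪ {+∞} is separable convex (Φ(x) = Σᵢ φᵢ(xᵢ) with univariate discrete convex φᵢ), then the convex envelope of f + Φ equals the sum of the convex envelopes: (f + Φ)‾ = f‾ + Φ‾ as functions ℝⁿ → ℝ ∪ {+∞}. -/
open scoped BigOperators

/-- The integral neighborhood N(u) = {z ∈ ℤⁿ : |uᵢ − zᵢ| < 1 for all i}. -/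
def intNbhd {n : ℕ} (u : Fin n → ℝ) : Set (Fin n → ℤ) :=
  {z | ∀ i, |u i - (z i : ℝ)| < 1}

/-- The local convex extension f̃(u): the infimum of convex combinations
Σ λ_z f(z) over points z of the integral neighborhood N(u) whose convex
combination with the weights λ equals u.  (It is +∞ when no such
combination exists.) -/
noncomputable def localConvexExt {n : ℕ} (f : (Fin n → ℤ) → EReal)
    (u : Fin n → ℝ) : EReal :=
  sInf { v : EReal | ∃ (t : Finset (Fin n → ℤ)) (lam : (Fin n → ℤ) → ℝ),
    (∀ z ∈ t, z ∈ intNbhd u) ∧ (∀ z ∈ t, 0 ≤ lam z) ∧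
    (∑ z ∈ t, lam z) = 1 ∧
    (∀ i, (∑ z ∈ t, lam z * (z i : ℝ)) = u i) ∧
    v = ∑ z ∈ t, (((lam z : ℝ) : EReal) * f z) }

/-- A function f : ℤⁿ → ℝ ∪ {+∞} with nonempty effective domain is
*integrally convex* if its local convex extension satisfies the midpoint
inequality f̃((x+y)/2) ≤ (f(x)+f(y))/2 for all x, y ∈ ℤⁿ with
‖x − y‖∞ ≥ 2 (this is equivalent to convexity of f̃ on ℝⁿ). -/
def IntegrallyConvexFn {n : ℕ} (f : (Fin n → ℤ) → EReal) : Prop :=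
  (∃ x, f x ≠ ⊤) ∧
  ∀ x y : Fin n → ℤ, (∃ i, 2 ≤ |x i - y i|) →
    localConvexExt f (fun i => ((x i + y i : ℤ) : ℝ) / 2) ≤ (f x + f y) / 2

/-- F : ℝⁿ → ℝ ∪ {+∞} (EReal-valued, never ⊥) is a convex function. -/
def ConvexEFn {n : ℕ} (F : (Fin n → ℝ) → EReal) : Prop :=
  (∀ u, F u ≠ ⊥) ∧
  ∀ (u v : Fin n → ℝ) (a b : ℝ), 0 ≤ a → 0 ≤ b → a + b = 1 →
    F (a • u + b • v) ≤ ((a : ℝ) : EReal) * F u + ((b : ℝ) : EReal) * F v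

/-- The convex envelope of g : ℤⁿ → ℝ ∪ {+∞}: the (pointwise) largest convex
function ℝⁿ → ℝ ∪ {+∞} minorizing g on ℤⁿ. -/
noncomputable def convEnvelope {n : ℕ} (g : (Fin n → ℤ) → EReal) :
    (Fin n → ℝ) → EReal :=
  fun u => ⨆ (F : (Fin n → ℝ) → EReal)
    (_ : ConvexEFn F ∧ ∀ z : Fin n → ℤ, F (fun i => (z i : ℝ)) ≤ g z), F u

/-!
Represent a point `u` as a convex combination of lattice points and fix a bound on the average of
`f`.  Among all such representations within a fixed box, take one with minimal mean squared norm.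
If two points `x`, `y` of its support differed by at least `2` in some coordinate, the midpoint
inequality would allow moving mass from `x` and `y` to integral neighbors of their midpoint; the
average of `f` would not increase, but the mean squared norm would strictly decrease.  So the
support lies in the integral neighborhood of `u`.  Hence the local convex extension of `f` is the
infimum over all representations of `u`, which makes it convex and equal to the convex envelope.

A separable convex `Φ` satisfies the same midpoint inequality.  Moreover, where its local extension
is finite, the whole integral neighborhood lies in the domain of `Φ`, and `Φ` is affine there, so
that all representations of `u` within the neighborhood give the same average of `Φ`.  A
representation that is optimal for `f` is therefore optimal for `Φ` as well, and the local
extensions add up.  The reverse inequality holds because the sum of convex minorants of `f` and `Φ`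
is a convex minorant of `f + Φ`.
-/

open Finsupp (linearCombination)

/-! ### Finite convex combinations -/

section ConvexCombinations

variable {ι E E' : Type*} [AddCommGroup E] [Module ℝ E] [AddCommGroup E'] [Module ℝ E']

/-- `u` is the convex combination with weights `w` of those points of the family `p` whose indices
lie in `S`.  The weights are finitely supported functions, so that the average of a function `g`
of the index is `linearCombination ℝ g w`, which is linear in `w`. -/
structure IsConvComb (p : ι → E) (S : Set ι) (w : ι →₀ ℝ) (u : E) : Prop where
  nonneg : 0 ≤ w
  support_subset : ↑w.support ⊆ S
  sum_weights : linearCombination ℝ (fun _ => (1 : ℝ)) w = 1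
  barycenter : linearCombination ℝ p w = u

lemma linearCombination_indicator (t : Finset ι) (lam : ι → ℝ) (p : ι → E) :
    linearCombination ℝ p (Finsupp.indicator t fun i _ => lam i) = ∑ i ∈ t, lam i • p i :=
  Finsupp.sum_indicator_index lam fun _ _ => zero_smul ℝ _

lemma linearCombination_fun_add (g g' : ι → E) (w : ι →₀ ℝ) :
    linearCombination ℝ (fun i => g i + g' i) w =
      linearCombination ℝ g w + linearCombination ℝ g' w := by
  simp [Finsupp.linearCombination_apply]

namespace IsConvComb

variable {p : ι → E} {S T : Set ι} {w w' : ι →₀ ℝ} {u v : E}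

lemma single {i : ι} (hi : i ∈ S) : IsConvComb p S (.single i 1) (p i) where
  nonneg := Finsupp.single_nonneg.2 zero_le_one
  support_subset := (Finset.coe_subset.2 Finsupp.support_single_subset).trans (by simpa using hi)
  sum_weights := by simp
  barycenter := by simp

lemma indicator {t : Finset ι} {lam : ι → ℝ} (ht : ↑t ⊆ S) (hlam : ∀ i ∈ t, 0 ≤ lam i)
    (hsum : ∑ i ∈ t, lam i = 1) :
    IsConvComb p S (Finsupp.indicator t fun i _ => lam i) (∑ i ∈ t, lam i • p i) where
  nonneg i := by
    classical
    rw [Finsupp.indicator_apply]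
    split_ifs with hi
    exacts [hlam i hi, le_rfl]
  support_subset := (Finset.coe_subset.2 (Finsupp.support_indicator_subset t _)).trans ht
  sum_weights := by simpa [linearCombination_indicator] using hsum
  barycenter := linearCombination_indicator t lam p

lemma mono (h : IsConvComb p S w u) (hST : S ⊆ T) : IsConvComb p T w u :=
  { h with support_subset := h.support_subset.trans hST }

lemma inter (h : IsConvComb p S w u) (hT : ↑w.support ⊆ T) : IsConvComb p (S ∩ T) w u :=
  { h with support_subset := Set.subset_inter h.support_subset hT }

lemma map (h : IsConvComb p S w u) (L : E →ₗ[ℝ] E') :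
    IsConvComb (fun i => L (p i)) S w (L u) :=
  { h with barycenter := by rw [← h.barycenter, Finsupp.apply_linearCombination]; rfl }

lemma prodMk (h : IsConvComb p S w u) (g : ι → E') :
    IsConvComb (fun i => (p i, g i)) S w (u, linearCombination ℝ g w) :=
  { h with
    barycenter := by
      refine Prod.ext ?_ ?_
      · simp [← h.barycenter, Finsupp.linearCombination_apply, Finsupp.sum, Prod.fst_sum]
      · simp [Finsupp.linearCombination_apply, Finsupp.sum, Prod.snd_sum] }

lemma add (h : IsConvComb p S w u) (h' : IsConvComb p S w' v) {a b : ℝ} (ha : 0 ≤ a)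
    (hb : 0 ≤ b) (hab : a + b = 1) : IsConvComb p S (a • w + b • w') (a • u + b • v) where
  nonneg := add_nonneg (smul_nonneg ha h.nonneg) (smul_nonneg hb h'.nonneg)
  support_subset := by
    classical
    intro i hi
    rcases Finset.mem_union.1 (Finsupp.support_add hi) with hi | hi
    · exact h.support_subset (Finsupp.support_smul hi)
    · exact h'.support_subset (Finsupp.support_smul hi)
  sum_weights := by simp [h.sum_weights, h'.sum_weights, hab]
  barycenter := by simp [h.barycenter, h'.barycenter]

lemma single_midpoint {i j : ι} (hi : i ∈ S) (hj : j ∈ S) :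
    IsConvComb p S ((2⁻¹ : ℝ) • .single i 1 + (2⁻¹ : ℝ) • .single j 1)
      (midpoint ℝ (p i) (p j)) := by
  rw [midpoint_eq_smul_add, smul_add, invOf_eq_inv]
  exact (single hi).add (single hj) (by norm_num) (by norm_num) (by norm_num)

lemma linearCombination_congr (h : IsConvComb p S w u) {g g' : ι → E'}
    (hg : ∀ i ∈ S, g i = g' i) : linearCombination ℝ g w = linearCombination ℝ g' w :=
  Finsupp.sum_congr fun i hi => by simp [hg i (h.support_subset hi)]

lemma linearCombination_const (h : IsConvComb p S w u) (c : E') :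
    linearCombination ℝ (fun _ => c) w = c := by
  simpa [Finsupp.linearCombination_apply, Finsupp.sum, ← Finset.sum_smul] using
    congrArg (· • c) h.sum_weights

lemma linearCombination_affine (h : IsConvComb p S w u) (L : E →ₗ[ℝ] E') (c : E') :
    linearCombination ℝ (fun i => L (p i) + c) w = L u + c := by
  rw [linearCombination_fun_add, (h.map L).barycenter, h.linearCombination_const]

lemma linearCombination_sum_affine {κ : Type*} [Fintype κ] {p : ι → κ → ℝ} {u : κ → ℝ}
    (h : IsConvComb p S w u) (a b : κ → ℝ) :
    linearCombination ℝ (fun i => ∑ k, (a k * p i k + b k)) w = ∑ k, (a k * u k + b k) := by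
  have := h.linearCombination_affine (∑ k, a k • LinearMap.proj k : (κ → ℝ) →ₗ[ℝ] ℝ) (∑ k, b k)
  simpa only [Finset.sum_add_distrib, LinearMap.sum_apply, LinearMap.smul_apply,
    LinearMap.proj_apply, smul_eq_mul] using this

lemma linearCombination_lt (h : IsConvComb p S w u) {g g' : ι → ℝ} (hle : ∀ i ∈ S, g i ≤ g' i)
    (hlt : ∃ i ∈ w.support, g i < g' i) : linearCombination ℝ g w < linearCombination ℝ g' w := by
  obtain ⟨j, hj, hgj⟩ := hlt
  refine Finset.sum_lt_sum (fun i hi => ?_) ⟨j, hj, ?_⟩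
  · exact mul_le_mul_of_nonneg_left (hle i (h.support_subset hi)) (h.nonneg i)
  · exact mul_lt_mul_of_pos_left hgj ((h.nonneg j).lt_of_ne' (Finsupp.mem_support_iff.1 hj))

lemma support_nonempty (h : IsConvComb p S w u) : w.support.Nonempty := by
  rw [Finsupp.support_nonempty_iff]
  rintro rfl
  simpa using h.sum_weights

lemma exists_le {p : ι → ℝ} {t : ℝ} (h : IsConvComb p S w t) : ∃ i ∈ w.support, p i ≤ t := by
  by_contra! hlt
  have h' : IsConvComb p w.support w t := { h with support_subset := subset_rfl }
  obtain ⟨i, hi⟩ := h.support_nonempty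
  have := h'.linearCombination_lt (fun i hi => (hlt i hi).le) ⟨i, hi, hlt i hi⟩
  exact absurd this (by simp [h.barycenter, h.linearCombination_const])

lemma exists_ge {p : ι → ℝ} {t : ℝ} (h : IsConvComb p S w t) : ∃ i ∈ w.support, t ≤ p i := by
  simpa using (h.map (-LinearMap.id)).exists_le

/-- The point `p j` itself contributes distance zero with a positive weight. -/
lemma dist_lt {E : Type*} [SeminormedAddCommGroup E] [NormedSpace ℝ E] {p : ι → E} {u : E}
    (h : IsConvComb p S w u) {j : ι} (hj : j ∈ w.support) {r : ℝ} (hr : 0 < r)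
    (hdist : ∀ i ∈ w.support, dist (p i) (p j) ≤ r) : dist u (p j) < r := by
  have h' : IsConvComb p w.support w u := { h with support_subset := subset_rfl }
  have hsub : linearCombination ℝ (fun i => p i - p j) w = u - p j := by
    simpa [sub_eq_add_neg] using h.linearCombination_affine LinearMap.id (-p j)
  calc dist u (p j) ≤ linearCombination ℝ (fun i => dist (p i) (p j)) w := by
        rw [dist_eq_norm, ← hsub]
        refine (norm_sum_le _ _).trans (Finset.sum_le_sum fun i _ => ?_)
        simp [norm_smul, abs_of_nonneg (h.nonneg i), dist_eq_norm]
    _ < linearCombination ℝ (fun _ => r) w :=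
        h'.linearCombination_lt hdist ⟨j, hj, by simpa using hr⟩
    _ = r := h.linearCombination_const r

/-- Move equal masses from the points `p i` and `p j` to a convex combination representing their
midpoint. -/
lemma exists_exchange (h : IsConvComb p S w u) {i j : ι} (hi : i ∈ w.support)
    (hj : j ∈ w.support) (hij : i ≠ j) {l : ι →₀ ℝ}
    (hl : IsConvComb p S l (midpoint ℝ (p i) (p j))) :
    ∃ δ : ℝ, 0 < δ ∧ IsConvComb p S (w + δ • ((2 : ℝ) • l - .single i 1 - .single j 1)) u := by
  classical
  have hpos {k : ι} (hk : k ∈ w.support) : 0 < w k :=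
    (h.nonneg k).lt_of_ne' (Finsupp.mem_support_iff.1 hk)
  refine ⟨min (w i) (w j), lt_min (hpos hi) (hpos hj),
    ⟨fun k => ?_, fun k hk => ?_, ?_, ?_⟩⟩
  · have hlk : 0 ≤ min (w i) (w j) * (2 * l k) :=
      mul_nonneg (lt_min (hpos hi) (hpos hj)).le (mul_nonneg zero_le_two (hl.nonneg k))
    rcases eq_or_ne i k with rfl | hik
    · suffices 0 ≤ w i + min (w i) (w j) * (2 * l i - 1) by simpa [hij.symm]
      linarith [min_le_left (w i) (w j)]
    rcases eq_or_ne j k with rfl | hjk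
    · suffices 0 ≤ w j + min (w i) (w j) * (2 * l j - 1) by simpa [hij]
      linarith [min_le_right (w i) (w j)]
    simpa [hik, hjk] using add_nonneg (h.nonneg k) hlk
  · by_contra hkS
    have hwk : w k = 0 := Finsupp.notMem_support_iff.1 fun hk => hkS (h.support_subset hk)
    have hlk : l k = 0 := Finsupp.notMem_support_iff.1 fun hk => hkS (hl.support_subset hk)
    have hik : i ≠ k := fun e => hkS (e ▸ h.support_subset hi)
    have hjk : j ≠ k := fun e => hkS (e ▸ h.support_subset hj)
    simp [hwk, hlk, hik, hjk] at hk
  · norm_num [h.sum_weights, hl.sum_weights]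
  · simp [h.barycenter, hl.barycenter, midpoint_eq_smul_add]

end IsConvComb

lemma mem_convexHull_image_iff_exists_isConvComb {p : ι → E} {S : Set ι} {u : E} :
    u ∈ convexHull ℝ (p '' S) ↔ ∃ w, IsConvComb p S w u := by
  constructor
  · refine fun hu => convexHull_min (t := {u | ∃ w, IsConvComb p S w u}) ?_ ?_ hu
    · rintro _ ⟨i, hi, rfl⟩
      exact ⟨_, .single hi⟩
    · rintro u ⟨w, hw⟩ v ⟨w', hw'⟩ a b ha hb hab
      exact ⟨_, hw.add hw' ha hb hab⟩
  · rintro ⟨w, hw⟩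
    rw [← hw.barycenter]
    refine (convex_convexHull ℝ _).sum_mem (fun i _ => hw.nonneg i) ?_ fun i hi =>
      subset_convexHull ℝ _ (Set.mem_image_of_mem p (hw.support_subset hi))
    simpa [Finsupp.linearCombination_apply, Finsupp.sum] using hw.sum_weights

lemma exists_isConvComb_forall_le [TopologicalSpace E] [IsTopologicalAddGroup E]
    [ContinuousSMul ℝ E] {p : ι → E} {S : Set ι} (hS : S.Finite) {C : Set E} (hC : IsClosed C)
    (q : ι → ℝ) {u : E} (hu : u ∈ C) {w : ι →₀ ℝ} (hw : IsConvComb p S w u) :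
    ∃ v ∈ C, ∃ m, IsConvComb p S m v ∧ ∀ v' ∈ C, ∀ m', IsConvComb p S m' v' →
      linearCombination ℝ q m ≤ linearCombination ℝ q m' := by
  have hK : IsCompact (convexHull ℝ ((fun i => (p i, q i)) '' S) ∩ Prod.fst ⁻¹' C) :=
    ((hS.image _).isCompact_convexHull ℝ).inter_right (hC.preimage continuous_fst)
  have hmem {v : E} (hv : v ∈ C) {m : ι →₀ ℝ} (hm : IsConvComb p S m v) :
      (v, linearCombination ℝ q m) ∈
        convexHull ℝ ((fun i => (p i, q i)) '' S) ∩ Prod.fst ⁻¹' C :=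
    ⟨mem_convexHull_image_iff_exists_isConvComb.2 ⟨m, hm.prodMk q⟩, hv⟩
  obtain ⟨⟨v, r⟩, ⟨hvr, hv⟩, hmin⟩ :=
    hK.exists_isMinOn ⟨_, hmem hu hw⟩ (f := Prod.snd) (by fun_prop)
  obtain ⟨m, hm⟩ := mem_convexHull_image_iff_exists_isConvComb.1 hvr
  refine ⟨v, hv, m, hm.map (LinearMap.fst ℝ E ℝ), fun v' hv' m' hm' => ?_⟩
  rw [show linearCombination ℝ q m = r from (hm.map (LinearMap.snd ℝ E ℝ)).barycenter]
  exact hmin (hmem hv' hm')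

/-- Among the combinations whose `g`-average is at most the given one, take one with minimal
`q`-average: exchanging a pair related by `R` would decrease the latter. -/
lemma exists_isConvComb_support_pairwise_not [TopologicalSpace E] [IsTopologicalAddGroup E]
    [ContinuousSMul ℝ E] [T1Space E] {p : ι → E} {S : Set ι} (hS : S.Finite) (g q : ι → ℝ)
    {R : ι → ι → Prop}
    (hR : ∀ i ∈ S, ∀ j ∈ S, R i j → ∃ l, IsConvComb p S l (midpoint ℝ (p i) (p j)) ∧
      2 * linearCombination ℝ g l ≤ g i + g j ∧ 2 * linearCombination ℝ q l < q i + q j)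
    {w : ι →₀ ℝ} {u : E} (h : IsConvComb p S w u) :
    ∃ m, IsConvComb p S m u ∧ linearCombination ℝ g m ≤ linearCombination ℝ g w ∧
      (m.support : Set ι).Pairwise fun i j => ¬ R i j := by
  obtain ⟨⟨v, r⟩, ⟨rfl, hr⟩, m, hm, hmin⟩ := exists_isConvComb_forall_le hS
    (isClosed_singleton.prod isClosed_Iic) q
    (Set.mk_mem_prod (Set.mem_singleton u) Set.self_mem_Iic) (h.prodMk g)
  have hmv : IsConvComb p S m v := hm.map (LinearMap.fst ℝ E ℝ)
  obtain rfl : linearCombination ℝ g m = r := (hm.map (LinearMap.snd ℝ E ℝ)).barycenter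
  refine ⟨m, hmv, hr, fun i hi j hj hij hRij => ?_⟩
  obtain ⟨l, hl, hgl, hql⟩ :=
    hR i (hmv.support_subset hi) j (hmv.support_subset hj) hRij
  obtain ⟨δ, hδ, hexch⟩ := hmv.exists_exchange hi hj hij hl
  have hexch_avg (φ : ι → ℝ) :
      linearCombination ℝ φ (m + δ • ((2 : ℝ) • l - .single i 1 - .single j 1)) =
        linearCombination ℝ φ m + δ * (2 * linearCombination ℝ φ l - φ i - φ j) := by simp
  have hg : linearCombination ℝ g (m + δ • ((2 : ℝ) • l - .single i 1 - .single j 1)) ≤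
      linearCombination ℝ g w :=
    (hexch_avg g).trans_le <| (add_le_of_nonpos_right <|
      mul_nonpos_of_nonneg_of_nonpos hδ.le (by linarith)).trans hr
  have hq := hmin _ (Set.mk_mem_prod rfl hg) _ (hexch.prodMk g)
  rw [hexch_avg q, le_add_iff_nonneg_right] at hq
  exact hq.not_gt (mul_neg_of_pos_of_neg hδ (by linarith))

end ConvexCombinations

/-! ### Extended-real sums and convex functions -/

lemma sum_ereal_ne_bot {ι : Type*} {s : Finset ι} {g : ι → EReal} (hg : ∀ i ∈ s, g i ≠ ⊥) :
    ∑ i ∈ s, g i ≠ ⊥ :=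
  Finset.sum_induction g (· ≠ ⊥) (fun _ _ ha hb => EReal.add_ne_bot_iff.2 ⟨ha, hb⟩)
    EReal.zero_ne_bot hg

lemma sum_ereal_ne_top_iff {ι : Type*} {s : Finset ι} {g : ι → EReal} (hg : ∀ i ∈ s, g i ≠ ⊥) :
    ∑ i ∈ s, g i ≠ ⊤ ↔ ∀ i ∈ s, g i ≠ ⊤ := by
  classical
  refine ⟨fun h i hi => ?_, fun h => ?_⟩
  · rw [← Finset.add_sum_erase s g hi, EReal.add_ne_top_iff_ne_top₂ (hg i hi)
      (sum_ereal_ne_bot fun j hj => hg j (Finset.mem_of_mem_erase hj))] at h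
    exact h.1
  · exact Finset.sum_induction g (· ≠ ⊤) (fun _ _ => EReal.add_ne_top) EReal.zero_ne_top h

lemma coe_sum_ereal {ι : Type*} (s : Finset ι) (g : ι → ℝ) :
    ((∑ i ∈ s, g i : ℝ) : EReal) = ∑ i ∈ s, (g i : EReal) :=
  map_sum (⟨⟨Real.toEReal, EReal.coe_zero⟩, EReal.coe_add⟩ : ℝ →+ EReal) g s

lemma toReal_sum_ereal {ι : Type*} {s : Finset ι} {g : ι → EReal} (hbot : ∀ i ∈ s, g i ≠ ⊥)
    (htop : ∑ i ∈ s, g i ≠ ⊤) : (∑ i ∈ s, g i).toReal = ∑ i ∈ s, (g i).toReal := by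
  rw [← EReal.coe_eq_coe_iff, EReal.coe_toReal htop (sum_ereal_ne_bot hbot), coe_sum_ereal]
  exact Finset.sum_congr rfl fun i hi =>
    (EReal.coe_toReal ((sum_ereal_ne_top_iff hbot).1 htop i hi) (hbot i hi)).symm

lemma coe_mul_add_ereal {a : ℝ} (ha : 0 ≤ a) (x y : EReal) :
    (a : EReal) * (x + y) = a * x + a * y :=
  EReal.left_distrib_of_nonneg_of_ne_top (EReal.coe_nonneg.2 ha) (EReal.coe_ne_top a) x y

lemma coe_mul_ereal_ne_bot {a : ℝ} (ha : 0 ≤ a) {x : EReal} (hx : x ≠ ⊥) : (a : EReal) * x ≠ ⊥ := by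
  simp [EReal.mul_ne_bot, hx, ha]

/-- The effective domain of an extended-real-valued function. -/
def effDom {α : Type*} (f : α → EReal) : Set α := {x | f x ≠ ⊤}

section ConvexEFn

variable {n : ℕ}

lemma ConvexEFn.add {F G : (Fin n → ℝ) → EReal} (hF : ConvexEFn F) (hG : ConvexEFn G) :
    ConvexEFn (fun u => F u + G u) := by
  refine ⟨fun u => EReal.add_ne_bot_iff.2 ⟨hF.1 u, hG.1 u⟩, fun u v a b ha hb hab => ?_⟩
  calc F (a • u + b • v) + G (a • u + b • v)
      ≤ (a * F u + b * F v) + (a * G u + b * G v) :=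
        add_le_add (hF.2 u v a b ha hb hab) (hG.2 u v a b ha hb hab)
    _ = a * (F u + G u) + b * (F v + G v) := by
        rw [coe_mul_add_ereal ha, coe_mul_add_ereal hb, add_add_add_comm]

lemma convexEFn_iff_convex_epigraph {F : (Fin n → ℝ) → EReal} (hF : ∀ u, F u ≠ ⊥) :
    ConvexEFn F ↔ Convex ℝ {q : (Fin n → ℝ) × ℝ | F q.1 ≤ q.2} := by
  refine ⟨?_, fun h => ⟨hF, fun u v a b ha hb hab => ?_⟩⟩
  · rintro h ⟨u, r⟩ hu ⟨v, s⟩ hv a b ha hb hab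
    calc F (a • u + b • v) ≤ a * F u + b * F v := h.2 u v a b ha hb hab
      _ ≤ a * r + b * s := by gcongr <;> assumption
      _ = ((a • r + b • s : ℝ) : EReal) := by simp
  · rcases ha.eq_or_lt with rfl | ha'
    · obtain rfl : b = 1 := by linarith
      simp
    rcases hb.eq_or_lt with rfl | hb'
    · obtain rfl : a = 1 := by linarith
      simp
    by_cases hu : F u = ⊤
    · simp [hu, EReal.coe_mul_top_of_pos ha', EReal.top_add_of_ne_bot,
        coe_mul_ereal_ne_bot hb (hF v)]
    by_cases hv : F v = ⊤
    · simp [hv, EReal.coe_mul_top_of_pos hb', EReal.add_top_of_ne_bot,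
        coe_mul_ereal_ne_bot ha (hF u)]
    have := h (x := (u, (F u).toReal)) (EReal.le_coe_toReal hu) (y := (v, (F v).toReal))
      (EReal.le_coe_toReal hv) ha hb hab
    simpa [EReal.coe_toReal, hu, hv, hF] using this

lemma ConvexEFn.le_linearCombination {ι : Type*} {p : ι → Fin n → ℝ} {S : Set ι} {w : ι →₀ ℝ}
    {u : Fin n → ℝ} {F : (Fin n → ℝ) → EReal} (hF : ConvexEFn F) (h : IsConvComb p S w u)
    {g : ι → ℝ} (hg : ∀ i ∈ S, F (p i) ≤ g i) : F u ≤ linearCombination ℝ g w := by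
  refine convexHull_min ?_ ((convexEFn_iff_convex_epigraph hF.1).1 hF)
    (mem_convexHull_image_iff_exists_isConvComb.2 ⟨w, h.prodMk g⟩)
  rintro _ ⟨i, hi, rfl⟩
  exact hg i hi

end ConvexEFn

/-! ### Integral neighborhoods -/

section IntegralNeighborhoods

variable {n : ℕ}

/-- The integer vector `z`, viewed as a point of `ℝⁿ`. -/
def latticePoint (z : Fin n → ℤ) : Fin n → ℝ := fun i => z i

@[simp]
lemma latticePoint_apply (z : Fin n → ℤ) (i : Fin n) : latticePoint z i = z i := rfl

lemma midpoint_latticePoint (x y : Fin n → ℤ) :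
    midpoint ℝ (latticePoint x) (latticePoint y) = fun i => ((x i + y i : ℤ) : ℝ) / 2 := by
  ext i
  simp [midpoint_eq_smul_add, div_eq_inv_mul]

lemma mem_intNbhd_iff_dist_lt_one {u : Fin n → ℝ} {z : Fin n → ℤ} :
    z ∈ intNbhd u ↔ dist u (latticePoint z) < 1 := by
  simp [intNbhd, dist_pi_lt_iff, Real.dist_eq]

lemma intNbhd_finite (u : Fin n → ℝ) : (intNbhd u).Finite := by
  refine (Set.finite_Icc (fun i => ⌊u i⌋) (fun i => ⌈u i⌉)).subset fun z hz =>
    ⟨fun i => ?_, fun i => ?_⟩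
  · have := abs_lt.1 (hz i)
    exact Int.floor_le_iff.2 (by linarith)
  · have := abs_lt.1 (hz i)
    exact Int.le_ceil_iff.2 (by linarith)

lemma mem_intNbhd_midpoint {x y z : Fin n → ℤ} :
    z ∈ intNbhd (midpoint ℝ (latticePoint x) (latticePoint y)) ↔
      ∀ i, |x i + y i - 2 * z i| ≤ 1 := by
  refine forall_congr' fun i => ?_
  have h : midpoint ℝ (latticePoint x) (latticePoint y) i - z i =
      ((x i + y i - 2 * z i : ℤ) : ℝ) / 2 := by
    rw [midpoint_latticePoint]
    push_cast
    ring
  rw [h, abs_div, abs_two, div_lt_one two_pos, ← Int.lt_add_one_iff]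
  exact_mod_cast Iff.rfl

lemma intNbhd_midpoint_subset_uIcc (x y : Fin n → ℤ) :
    intNbhd (midpoint ℝ (latticePoint x) (latticePoint y)) ⊆ Set.uIcc x y := by
  intro z hz
  rw [mem_intNbhd_midpoint] at hz
  refine ⟨fun i => ?_, fun i => ?_⟩
  · have := abs_le.1 (hz i)
    exact inf_le_iff.2 (by omega : x i ≤ z i ∨ y i ≤ z i)
  · have := abs_le.1 (hz i)
    exact le_sup_iff.2 (by omega : z i ≤ x i ∨ z i ≤ y i)

lemma sq_add_mul_le_of_abs_le_one {a b c : ℤ} (h : |a + b - 2 * c| ≤ 1) :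
    c ^ 2 + a * b ≤ (a + b) * c := by
  suffices (c - a) * (c - b) ≤ 0 by linarith
  rw [abs_le] at h
  rcases lt_trichotomy c a with hca | rfl | hca
  · exact mul_nonpos_of_nonpos_of_nonneg (by omega) (by omega)
  · simp
  · exact mul_nonpos_of_nonneg_of_nonpos (by omega) (by omega)

lemma sq_add_mul_lt_of_abs_le_one {a b c : ℤ} (h : |a + b - 2 * c| ≤ 1) (hab : 2 ≤ |a - b|) :
    c ^ 2 + a * b < (a + b) * c := by
  refine (sq_add_mul_le_of_abs_le_one h).lt_of_ne fun heq => ?_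
  have hprod : (c - a) * (c - b) = 0 := by linarith
  rw [abs_le] at h
  rw [le_abs] at hab
  rcases mul_eq_zero.1 hprod with hc | hc <;> omega

lemma IsConvComb.linearCombination_sum_sq_lt {x y : Fin n → ℤ} (hxy : ∃ i, 2 ≤ |x i - y i|)
    {l : (Fin n → ℤ) →₀ ℝ}
    (h : IsConvComb latticePoint (intNbhd (midpoint ℝ (latticePoint x) (latticePoint y))) l
      (midpoint ℝ (latticePoint x) (latticePoint y))) :
    2 * linearCombination ℝ (fun z => ∑ i, (z i : ℝ) ^ 2) l <
      ∑ i, (x i : ℝ) ^ 2 + ∑ i, (y i : ℝ) ^ 2 := by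
  have hlt : ∀ z ∈ intNbhd (midpoint ℝ (latticePoint x) (latticePoint y)),
      ∑ i, (z i : ℝ) ^ 2 < ∑ i, ((x i + y i : ℝ) * z i + -(x i * y i)) := by
    intro z hz
    rw [mem_intNbhd_midpoint] at hz
    obtain ⟨j, hj⟩ := hxy
    refine Finset.sum_lt_sum (fun i _ => ?_) ⟨j, Finset.mem_univ j, ?_⟩
    · rw [le_add_neg_iff_add_le]
      exact_mod_cast sq_add_mul_le_of_abs_le_one (hz i)
    · rw [lt_add_neg_iff_add_lt]
      exact_mod_cast sq_add_mul_lt_of_abs_le_one (hz j) hj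
  obtain ⟨z, hz⟩ := h.support_nonempty
  calc 2 * linearCombination ℝ (fun z => ∑ i, (z i : ℝ) ^ 2) l
      < 2 * linearCombination ℝ (fun z => ∑ i, ((x i + y i : ℝ) * z i + -(x i * y i))) l := by
        gcongr
        exact h.linearCombination_lt (fun z hz => (hlt z hz).le)
          ⟨z, hz, hlt z (h.support_subset hz)⟩
    _ = 2 * ∑ i, ((x i + y i : ℝ) * midpoint ℝ (latticePoint x) (latticePoint y) i +
          -(x i * y i)) := congrArg _ (h.linearCombination_sum_affine _ _)
    _ = ∑ i, (x i : ℝ) ^ 2 + ∑ i, (y i : ℝ) ^ 2 := by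
        rw [Finset.mul_sum, ← Finset.sum_add_distrib]
        refine Finset.sum_congr rfl fun i _ => ?_
        rw [midpoint_latticePoint]
        push_cast
        ring

end IntegralNeighborhoods

/-! ### The local convex extension -/

/-- Points outside the effective domain may occur in the sum, because `0 * ⊤ = 0`, but only with
weight zero. -/
lemma exists_isConvComb_of_sum_ne_top {ι E : Type*} [AddCommGroup E] [Module ℝ E] {p : ι → E}
    {S : Set ι} {t : Finset ι} {lam : ι → ℝ} (ht : ↑t ⊆ S) (hlam : ∀ i ∈ t, 0 ≤ lam i)
    (hsum : ∑ i ∈ t, lam i = 1) {f : ι → EReal} (hnb : ∀ i, f i ≠ ⊥)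
    (htop : ∑ i ∈ t, (lam i : EReal) * f i ≠ ⊤) :
    ∃ w, IsConvComb p (S ∩ effDom f) w (∑ i ∈ t, lam i • p i) ∧
      (linearCombination ℝ (fun i => (f i).toReal) w : EReal) =
        ∑ i ∈ t, (lam i : EReal) * f i := by
  have hfin : ∀ i ∈ t, lam i ≠ 0 → f i ≠ ⊤ := fun i hi h0 hfi =>
    (sum_ereal_ne_top_iff fun i hi => coe_mul_ereal_ne_bot (hlam i hi) (hnb i)).1 htop i hi
      (hfi ▸ EReal.coe_mul_top_of_pos ((hlam i hi).lt_of_ne' h0))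
  refine ⟨_, (IsConvComb.indicator ht hlam hsum).inter fun i hi => ?_, ?_⟩
  · have hit : i ∈ t := Finsupp.support_indicator_subset t _ hi
    refine hfin i hit ?_
    simpa [Finsupp.indicator_of_mem hit] using hi
  · rw [linearCombination_indicator, coe_sum_ereal]
    refine Finset.sum_congr rfl fun i hi => ?_
    rcases eq_or_ne (lam i) 0 with h0 | h0
    · simp [h0]
    · simp [EReal.coe_toReal (hfin i hi h0) (hnb i)]

section LocalConvexExt

variable {n : ℕ} {f : (Fin n → ℤ) → EReal} {u : Fin n → ℝ}

lemma localConvexExt_eq_iInf (hnb : ∀ z, f z ≠ ⊥) (u : Fin n → ℝ) :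
    localConvexExt f u = ⨅ (w) (_ : IsConvComb latticePoint (intNbhd u ∩ effDom f) w u),
      (linearCombination ℝ (fun z => (f z).toReal) w : EReal) := by
  refine le_antisymm (le_iInf₂ fun w h => sInf_le ?_) (le_sInf ?_)
  · refine ⟨w.support, w, fun z hz => (h.support_subset hz).1, fun z _ => h.nonneg z, ?_,
      fun i => ?_, ?_⟩
    · simpa [Finsupp.linearCombination_apply, Finsupp.sum] using h.sum_weights
    · simpa [Finsupp.linearCombination_apply, Finsupp.sum] using congrFun h.barycenter i
    · rw [Finsupp.linearCombination_apply, Finsupp.sum, coe_sum_ereal]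
      refine Finset.sum_congr rfl fun z hz => ?_
      rw [smul_eq_mul, EReal.coe_mul, EReal.coe_toReal (h.support_subset hz).2 (hnb z)]
  · rintro v ⟨t, lam, ht, hlam, hsum, hu, rfl⟩
    rcases eq_or_ne (∑ z ∈ t, (lam z : EReal) * f z) ⊤ with htop | htop
    · exact htop ▸ le_top
    obtain ⟨w, hw, hval⟩ :=
      exists_isConvComb_of_sum_ne_top (p := latticePoint) ht hlam hsum hnb htop
    have hbary : ∑ z ∈ t, lam z • latticePoint z = u := by
      ext i
      simpa using hu i
    exact hval ▸ iInf₂_le w (hbary ▸ hw)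

lemma IsConvComb.localConvexExt_le {w : (Fin n → ℤ) →₀ ℝ}
    (h : IsConvComb latticePoint (intNbhd u ∩ effDom f) w u) (hnb : ∀ z, f z ≠ ⊥) :
    localConvexExt f u ≤ linearCombination ℝ (fun z => (f z).toReal) w :=
  localConvexExt_eq_iInf hnb u ▸ iInf₂_le w h

lemma exists_isConvComb_localConvexExt_eq (hnb : ∀ z, f z ≠ ⊥) (hu : localConvexExt f u ≠ ⊤) :
    ∃ w, IsConvComb latticePoint (intNbhd u ∩ effDom f) w u ∧
      localConvexExt f u = linearCombination ℝ (fun z => (f z).toReal) w := by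
  obtain ⟨w, hw⟩ : ∃ w, IsConvComb latticePoint (intNbhd u ∩ effDom f) w u := by
    by_contra! hnone
    simp [localConvexExt_eq_iInf hnb, hnone] at hu
  obtain ⟨v, rfl, m, hm, hmin⟩ :=
    exists_isConvComb_forall_le ((intNbhd_finite u).inter_of_left (effDom f)) isClosed_singleton
      (fun z => (f z).toReal) (Set.mem_singleton u) hw
  refine ⟨m, hm, (hm.localConvexExt_le hnb).antisymm ?_⟩
  rw [localConvexExt_eq_iInf hnb]
  exact le_iInf₂ fun w hw => EReal.coe_le_coe_iff.2 (hmin v rfl w hw)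

lemma localConvexExt_ne_bot (hnb : ∀ z, f z ≠ ⊥) (u : Fin n → ℝ) : localConvexExt f u ≠ ⊥ := by
  by_cases hu : localConvexExt f u = ⊤
  · simp [hu]
  · obtain ⟨w, -, hw⟩ := exists_isConvComb_localConvexExt_eq hnb hu
    simp [hw]

lemma localConvexExt_latticePoint_le (hnb : ∀ z, f z ≠ ⊥) (z : Fin n → ℤ) :
    localConvexExt f (latticePoint z) ≤ f z := by
  by_cases hz : f z = ⊤
  · simp [hz]
  · have hmem : z ∈ intNbhd (latticePoint z) := mem_intNbhd_iff_dist_lt_one.2 (by simp)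
    simpa [EReal.coe_toReal hz (hnb z)] using
      (IsConvComb.single (p := latticePoint) (Set.mem_inter hmem hz)).localConvexExt_le hnb

end LocalConvexExt

/-! ### Localization of convex combinations -/

section LocalMidpointConvex

variable {n : ℕ} {f : (Fin n → ℤ) → EReal} {u : Fin n → ℝ}

/-- The midpoint inequality in the definition of integral convexity.  The effective domain may be
empty, so that a separable convex function always has this property. -/
def LocalMidpointConvex (f : (Fin n → ℤ) → EReal) : Prop :=
  ∀ x y : Fin n → ℤ, (∃ i, 2 ≤ |x i - y i|) →
    localConvexExt f (midpoint ℝ (latticePoint x) (latticePoint y)) ≤ (f x + f y) / 2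

lemma IntegrallyConvexFn.localMidpointConvex (hf : IntegrallyConvexFn f) :
    LocalMidpointConvex f := fun x y hxy => by
  simpa only [midpoint_latticePoint] using hf.2 x y hxy

namespace LocalMidpointConvex

lemma exists_isConvComb_midpoint (hf : LocalMidpointConvex f) (hnb : ∀ z, f z ≠ ⊥)
    {x y : Fin n → ℤ} (hx : f x ≠ ⊤) (hy : f y ≠ ⊤) (hxy : ∃ i, 2 ≤ |x i - y i|) :
    ∃ l, IsConvComb latticePoint
        (intNbhd (midpoint ℝ (latticePoint x) (latticePoint y)) ∩ effDom f) l
        (midpoint ℝ (latticePoint x) (latticePoint y)) ∧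
      2 * linearCombination ℝ (fun z => (f z).toReal) l ≤ (f x).toReal + (f y).toReal := by
  have hle : localConvexExt f (midpoint ℝ (latticePoint x) (latticePoint y)) ≤
      (((f x).toReal + (f y).toReal) / 2 : ℝ) := by
    rw [EReal.coe_div, EReal.coe_add, EReal.coe_toReal hx (hnb x), EReal.coe_toReal hy (hnb y)]
    exact hf x y hxy
  obtain ⟨l, hl, heq⟩ :=
    exists_isConvComb_localConvexExt_eq hnb (hle.trans_lt (EReal.coe_lt_top _)).ne
  rw [heq, EReal.coe_le_coe_iff] at hle
  exact ⟨l, hl, by linarith⟩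

lemma exists_isConvComb_support_close (hf : LocalMidpointConvex f) (hnb : ∀ z, f z ≠ ⊥)
    {w : (Fin n → ℤ) →₀ ℝ} (h : IsConvComb latticePoint (effDom f) w u) :
    ∃ m, IsConvComb latticePoint (effDom f) m u ∧
      linearCombination ℝ (fun z => (f z).toReal) m ≤
        linearCombination ℝ (fun z => (f z).toReal) w ∧
      ∀ x ∈ m.support, ∀ y ∈ m.support, ∀ i, |x i - y i| ≤ 1 := by
  obtain ⟨a, ha⟩ := w.support.bddBelow
  obtain ⟨b, hb⟩ := w.support.bddAbove
  obtain ⟨m, hm, hcost, hpair⟩ := exists_isConvComb_support_pairwise_not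
    (R := fun x y : Fin n → ℤ => ∃ i, 2 ≤ |x i - y i|)
    ((Set.finite_Icc a b).inter_of_right (effDom f)) (fun z => (f z).toReal)
    (fun z => ∑ i, (z i : ℝ) ^ 2)
    (fun x ⟨hxf, hxab⟩ y ⟨hyf, hyab⟩ hxy => by
      obtain ⟨l, hl, hle⟩ := hf.exists_isConvComb_midpoint hnb hxf hyf hxy
      refine ⟨l, hl.mono fun z hz => ⟨hz.2, ?_⟩, hle,
        (hl.mono Set.inter_subset_left).linearCombination_sum_sq_lt hxy⟩
      exact Set.uIcc_subset_Icc hxab hyab (intNbhd_midpoint_subset_uIcc x y hz.1))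
    (h.inter fun z hz => ⟨ha hz, hb hz⟩)
  refine ⟨m, hm.mono Set.inter_subset_left, hcost, fun x hx y hy i => ?_⟩
  rcases eq_or_ne x y with rfl | hxy
  · simp
  · by_contra! hi
    exact hpair hx hy hxy ⟨i, hi⟩

lemma exists_isConvComb_intNbhd (hf : LocalMidpointConvex f) (hnb : ∀ z, f z ≠ ⊥)
    {w : (Fin n → ℤ) →₀ ℝ} (h : IsConvComb latticePoint (effDom f) w u) :
    ∃ m, IsConvComb latticePoint (intNbhd u ∩ effDom f) m u ∧
      linearCombination ℝ (fun z => (f z).toReal) m ≤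
        linearCombination ℝ (fun z => (f z).toReal) w := by
  obtain ⟨m, hm, hcost, hclose⟩ := hf.exists_isConvComb_support_close hnb h
  refine ⟨m, Set.inter_comm _ _ ▸ hm.inter fun y hy => ?_, hcost⟩
  refine mem_intNbhd_iff_dist_lt_one.2 (hm.dist_lt hy one_pos fun x hx => ?_)
  refine (dist_pi_le_iff zero_le_one).2 fun i => ?_
  rw [Real.dist_eq, latticePoint_apply, latticePoint_apply]
  exact_mod_cast hclose x hx y hy i

lemma localConvexExt_le (hf : LocalMidpointConvex f) (hnb : ∀ z, f z ≠ ⊥)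
    {w : (Fin n → ℤ) →₀ ℝ} (h : IsConvComb latticePoint (effDom f) w u) :
    localConvexExt f u ≤ linearCombination ℝ (fun z => (f z).toReal) w := by
  obtain ⟨m, hm, hcost⟩ := hf.exists_isConvComb_intNbhd hnb h
  exact (hm.localConvexExt_le hnb).trans (EReal.coe_le_coe_iff.2 hcost)

lemma convexEFn (hf : LocalMidpointConvex f) (hnb : ∀ z, f z ≠ ⊥) :
    ConvexEFn (localConvexExt f) := by
  rw [convexEFn_iff_convex_epigraph (localConvexExt_ne_bot hnb)]
  rintro ⟨u, r⟩ hu ⟨v, s⟩ hv a b ha hb hab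
  rw [Set.mem_ofPred_eq] at hu hv
  obtain ⟨w, hw, hwu⟩ :=
    exists_isConvComb_localConvexExt_eq hnb (hu.trans_lt (EReal.coe_lt_top r)).ne
  obtain ⟨w', hw', hwv⟩ :=
    exists_isConvComb_localConvexExt_eq hnb (hv.trans_lt (EReal.coe_lt_top s)).ne
  rw [hwu, EReal.coe_le_coe_iff] at hu
  rw [hwv, EReal.coe_le_coe_iff] at hv
  have hcomb := (hw.mono Set.inter_subset_right).add (hw'.mono Set.inter_subset_right) ha hb hab
  refine (hf.localConvexExt_le hnb hcomb).trans (EReal.coe_le_coe_iff.2 ?_)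
  rw [map_add, map_smul, map_smul]
  exact add_le_add (smul_le_smul_of_nonneg_left hu ha) (smul_le_smul_of_nonneg_left hv hb)

end LocalMidpointConvex

end LocalMidpointConvex

section ConvEnvelope

variable {n : ℕ} {f : (Fin n → ℤ) → EReal}

lemma convEnvelope_le_localConvexExt (hnb : ∀ z, f z ≠ ⊥) (u : Fin n → ℝ) :
    convEnvelope f u ≤ localConvexExt f u := by
  refine iSup₂_le fun F hF => ?_
  rw [localConvexExt_eq_iInf hnb]
  exact le_iInf₂ fun w hw => hF.1.le_linearCombination hw fun z hz =>
    (hF.2 z).trans (EReal.le_coe_toReal hz.2)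

lemma LocalMidpointConvex.convEnvelope_eq (hf : LocalMidpointConvex f) (hnb : ∀ z, f z ≠ ⊥) :
    convEnvelope f = localConvexExt f :=
  funext fun u => (convEnvelope_le_localConvexExt hnb u).antisymm <|
    le_iSup₂_of_le _ ⟨hf.convexEFn hnb, localConvexExt_latticePoint_le hnb⟩ le_rfl

lemma convEnvelope_add_le (f g : (Fin n → ℤ) → EReal) (u : Fin n → ℝ) :
    convEnvelope f u + convEnvelope g u ≤ convEnvelope (fun z => f z + g z) u := by
  refine EReal.add_le_of_forall_lt fun a ha b hb => ?_
  simp only [convEnvelope, lt_iSup_iff] at ha hb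
  obtain ⟨F, ⟨hF, hFf⟩, ha⟩ := ha
  obtain ⟨G, ⟨hG, hGg⟩, hb⟩ := hb
  exact le_iSup₂_of_le (fun v => F v + G v) ⟨hF.add hG, fun z => add_le_add (hFf z) (hGg z)⟩
    (add_le_add ha.le hb.le)

end ConvEnvelope

/-! ### Separable convex functions -/

section Separable

variable {n : ℕ} {f : (Fin n → ℤ) → EReal} {φ : Fin n → ℤ → EReal} {u : Fin n → ℝ}

/-- Univariate discrete convexity for functions with values in `ℝ ∪ {+∞}`: the effective domain
is an interval and the second differences are nonnegative. -/
structure IsDiscreteConvex (ψ : ℤ → EReal) : Prop where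
  ne_bot : ∀ k, ψ k ≠ ⊥
  ordConnected_effDom : (effDom ψ).OrdConnected
  two_mul_le : ∀ k, 2 * ψ k ≤ ψ (k - 1) + ψ (k + 1)

lemma sub_le_sub_of_two_mul_le {R : Type*} [CommRing R] [LinearOrder R] [IsStrictOrderedRing R]
    {ψ : ℤ → R} {k m : ℤ} (hkm : k ≤ m)
    (h : ∀ j, k < j → j ≤ m → 2 * ψ j ≤ ψ (j - 1) + ψ (j + 1)) :
    ψ (k + 1) - ψ k ≤ ψ (m + 1) - ψ m := by
  induction m, hkm using Int.leInduction with
  | base => exact le_rfl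
  | succ m hkm ih =>
    have hm := h (m + 1) (by omega) le_rfl
    rw [add_sub_cancel_right] at hm
    linarith [ih fun j hkj hjm => h j hkj (by omega)]

lemma add_le_add_of_two_mul_le {R : Type*} [CommRing R] [LinearOrder R] [IsStrictOrderedRing R]
    {ψ : ℤ → R} {k m a b : ℤ} (hka : k ≤ a) (hab : a ≤ b)
    (hsum : a + b = k + m) (h : ∀ j, k < j → j < m → 2 * ψ j ≤ ψ (j - 1) + ψ (j + 1)) :
    ψ a + ψ b ≤ ψ k + ψ m := by
  induction a, hka using Int.leInduction generalizing b with
  | base => rw [add_left_cancel hsum]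
  | succ a hka ih =>
    have hinc := sub_le_sub_of_two_mul_le (ψ := ψ) (k := a) (m := b) (by omega)
      fun j hkj hjm => h j (by omega) (by omega)
    linarith [ih (b := b + 1) (by omega) (by omega)]

lemma IsDiscreteConvex.add_le_add_of_add_eq {ψ : ℤ → EReal} (hψ : IsDiscreteConvex ψ) {k m a b : ℤ}
    (hka : k ≤ a) (hab : a ≤ b) (hsum : a + b = k + m) : ψ a + ψ b ≤ ψ k + ψ m := by
  by_cases hk : ψ k = ⊤
  · simp [hk, EReal.top_add_of_ne_bot (hψ.ne_bot m)]
  by_cases hm : ψ m = ⊤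
  · simp [hm, EReal.add_top_of_ne_bot (hψ.ne_bot k)]
  have hcoe : ∀ j ∈ Set.Icc k m, ((ψ j).toReal : EReal) = ψ j := fun j hj =>
    EReal.coe_toReal (hψ.ordConnected_effDom.out hk hm hj) (hψ.ne_bot j)
  have hreal := add_le_add_of_two_mul_le (ψ := fun j => (ψ j).toReal) hka hab hsum
    fun j hkj hjm => by
      have hj := hψ.two_mul_le j
      rw [← hcoe j ⟨by omega, by omega⟩, ← hcoe (j - 1) ⟨by omega, by omega⟩,
        ← hcoe (j + 1) ⟨by omega, by omega⟩] at hj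
      exact EReal.coe_le_coe_iff.1 hj
  rw [← hcoe a ⟨by omega, by omega⟩, ← hcoe b ⟨by omega, by omega⟩,
    ← hcoe k ⟨by omega, by omega⟩, ← hcoe m ⟨by omega, by omega⟩]
  exact_mod_cast hreal

lemma IsDiscreteConvex.add_half_le_add {ψ : ℤ → EReal} (hψ : IsDiscreteConvex ψ) (k m : ℤ) :
    ψ ((k + m) / 2) + ψ (k + m - (k + m) / 2) ≤ ψ k + ψ m := by
  rcases le_total k m with hkm | hmk
  · exact hψ.add_le_add_of_add_eq (by omega) (by omega) (by omega)
  · rw [add_comm (ψ k)]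
    exact hψ.add_le_add_of_add_eq (by omega) (by omega) (by omega)

lemma localConvexExt_midpoint_le (hnb : ∀ z, f z ≠ ⊥) {x y : Fin n → ℤ}
    (hx : x ∈ intNbhd (midpoint ℝ (latticePoint x) (latticePoint y)))
    (hy : y ∈ intNbhd (midpoint ℝ (latticePoint x) (latticePoint y))) :
    localConvexExt f (midpoint ℝ (latticePoint x) (latticePoint y)) ≤ (f x + f y) / 2 := by
  by_cases htop : f x + f y = ⊤
  · rw [htop, EReal.top_div_of_pos_ne_top two_pos (EReal.coe_ne_top 2)]
    exact le_top
  obtain ⟨hfx, hfy⟩ := (EReal.add_ne_top_iff_ne_top₂ (hnb x) (hnb y)).1 htop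
  have hcomb :=
    IsConvComb.single_midpoint (p := latticePoint) (S := _ ∩ effDom f) ⟨hx, hfx⟩ ⟨hy, hfy⟩
  calc localConvexExt f (midpoint ℝ (latticePoint x) (latticePoint y))
      ≤ linearCombination ℝ (fun z => (f z).toReal) _ := hcomb.localConvexExt_le hnb
    _ = (((f x).toReal + (f y).toReal) / 2 : ℝ) := by
        simp [div_eq_inv_mul, mul_add]
    _ = (f x + f y) / 2 := by
        rw [EReal.coe_div, EReal.coe_add, EReal.coe_toReal hfx (hnb x),
          EReal.coe_toReal hfy (hnb y)]
        rfl

lemma localMidpointConvex_separable (hφ : ∀ i, IsDiscreteConvex (φ i)) :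
    LocalMidpointConvex fun z => ∑ i, φ i (z i) := by
  intro x y _
  let a : Fin n → ℤ := fun i => (x i + y i) / 2
  let b : Fin n → ℤ := fun i => x i + y i - (x i + y i) / 2
  have hmid : midpoint ℝ (latticePoint a) (latticePoint b) =
      midpoint ℝ (latticePoint x) (latticePoint y) := by
    simp only [midpoint_latticePoint, a, b, add_sub_cancel]
  rw [← hmid]
  refine (localConvexExt_midpoint_le (fun z => sum_ereal_ne_bot fun i _ => (hφ i).ne_bot _)
    (mem_intNbhd_midpoint.2 fun i => ?_) (mem_intNbhd_midpoint.2 fun i => ?_)).trans ?_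
  · simp only [a, b, abs_le]
    omega
  · simp only [a, b, abs_le]
    omega
  · refine EReal.div_le_div_right_of_nonneg zero_le_two ?_
    simp only [← Finset.sum_add_distrib]
    exact Finset.sum_le_sum fun i _ => (hφ i).add_half_le_add _ _

lemma exists_eq_affine_of_abs_sub_lt_one (ψ : ℤ → ℝ) (t : ℝ) :
    ∃ a b : ℝ, ∀ k : ℤ, |t - k| < 1 → ψ k = a * k + b := by
  refine ⟨ψ (⌊t⌋ + 1) - ψ ⌊t⌋, ψ ⌊t⌋ - (ψ (⌊t⌋ + 1) - ψ ⌊t⌋) * ⌊t⌋, fun k hk => ?_⟩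
  obtain rfl | rfl : k = ⌊t⌋ ∨ k = ⌊t⌋ + 1 := by
    rw [abs_lt] at hk
    have hlower : ⌊t⌋ < k + 1 := Int.floor_lt.2 (by push_cast; linarith)
    have hupper : k - 1 ≤ ⌊t⌋ := Int.le_floor.2 (by push_cast; linarith)
    omega
  · ring
  · push_cast
    ring

lemma IsConvComb.exists_mem_support_apply_eq {w : (Fin n → ℤ) →₀ ℝ}
    (h : IsConvComb latticePoint (intNbhd u) w u) {x : Fin n → ℤ} (hx : x ∈ intNbhd u)
    (i : Fin n) : ∃ z ∈ w.support, z i = x i := by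
  suffices ∃ z ∈ w.support, |(z i : ℝ) - x i| < 1 by
    obtain ⟨z, hz, hzx⟩ := this
    exact ⟨z, hz, sub_eq_zero.1 (Int.abs_lt_one_iff.1 (by exact_mod_cast hzx))⟩
  have hxi := abs_lt.1 (hx i)
  have hnear : ∀ z ∈ w.support, |u i - z i| < 1 := fun z hz => h.support_subset hz i
  have hproj : IsConvComb (fun z : Fin n → ℤ => (z i : ℝ)) (intNbhd u) w (u i) :=
    h.map (LinearMap.proj i)
  rcases le_total (x i : ℝ) (u i) with hxu | hux
  · obtain ⟨z, hz, hzu⟩ := hproj.exists_le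
    have hzi := abs_lt.1 (hnear z hz)
    exact ⟨z, hz, abs_lt.2 ⟨by linarith, by linarith⟩⟩
  · obtain ⟨z, hz, huz⟩ := hproj.exists_ge
    have hzi := abs_lt.1 (hnear z hz)
    exact ⟨z, hz, abs_lt.2 ⟨by linarith, by linarith⟩⟩

lemma intNbhd_subset_effDom_separable (hnb : ∀ i k, φ i k ≠ ⊥)
    (hu : localConvexExt (fun z => ∑ i, φ i (z i)) u ≠ ⊤) :
    intNbhd u ⊆ effDom fun z => ∑ i, φ i (z i) := by
  intro x hx
  obtain ⟨w, hw, -⟩ :=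
    exists_isConvComb_localConvexExt_eq (fun z => sum_ereal_ne_bot fun i _ => hnb i (z i)) hu
  refine (sum_ereal_ne_top_iff fun i _ => hnb i (x i)).2 fun i hi => ?_
  obtain ⟨z, hz, hzx⟩ := (hw.mono Set.inter_subset_left).exists_mem_support_apply_eq hx i
  rw [← hzx]
  exact (sum_ereal_ne_top_iff fun i _ => hnb i (z i)).1 (hw.support_subset hz).2 i hi

/-- A separable function is affine on each integral neighborhood. -/
lemma IsConvComb.linearCombination_separable_eq {w w' : (Fin n → ℤ) →₀ ℝ}
    (h : IsConvComb latticePoint (intNbhd u) w u) (h' : IsConvComb latticePoint (intNbhd u) w' u)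
    (hnb : ∀ i k, φ i k ≠ ⊥) (hdom : intNbhd u ⊆ effDom fun z => ∑ i, φ i (z i)) :
    linearCombination ℝ (fun z => (∑ i, φ i (z i)).toReal) w =
      linearCombination ℝ (fun z => (∑ i, φ i (z i)).toReal) w' := by
  choose a b hab using fun i => exists_eq_affine_of_abs_sub_lt_one (fun k => (φ i k).toReal) (u i)
  have hval : ∀ z ∈ intNbhd u,
      (∑ i, φ i (z i)).toReal = ∑ i, (a i * latticePoint z i + b i) := fun z hz =>
    (toReal_sum_ereal (fun i _ => hnb i (z i)) (hdom hz)).trans <|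
      Finset.sum_congr rfl fun i _ => hab i (z i) (hz i)
  rw [h.linearCombination_congr hval, h'.linearCombination_congr hval,
    h.linearCombination_sum_affine, h'.linearCombination_sum_affine]

lemma localConvexExt_add_separable_le (hf : ∀ z, f z ≠ ⊥) (hφ : ∀ i k, φ i k ≠ ⊥)
    (u : Fin n → ℝ) :
    localConvexExt (fun z => f z + ∑ i, φ i (z i)) u ≤
      localConvexExt f u + localConvexExt (fun z => ∑ i, φ i (z i)) u := by
  have hΦ : ∀ z : Fin n → ℤ, ∑ i, φ i (z i) ≠ ⊥ := fun z => sum_ereal_ne_bot fun i _ => hφ i (z i)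
  by_cases hfu : localConvexExt f u = ⊤
  · simp [hfu, EReal.top_add_of_ne_bot (localConvexExt_ne_bot hΦ u)]
  by_cases hΦu : localConvexExt (fun z => ∑ i, φ i (z i)) u = ⊤
  · simp [hΦu, EReal.add_top_of_ne_bot (localConvexExt_ne_bot hf u)]
  obtain ⟨w, hw, hwf⟩ := exists_isConvComb_localConvexExt_eq hf hfu
  obtain ⟨w', hw', hwΦ⟩ := exists_isConvComb_localConvexExt_eq hΦ hΦu
  have hdom := intNbhd_subset_effDom_separable hφ hΦu
  have hsum : IsConvComb latticePoint (intNbhd u ∩ effDom fun z => f z + ∑ i, φ i (z i)) w u :=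
    hw.mono fun z hz => ⟨hz.1, EReal.add_ne_top hz.2 (hdom hz.1)⟩
  calc localConvexExt (fun z => f z + ∑ i, φ i (z i)) u
      ≤ linearCombination ℝ (fun z => (f z + ∑ i, φ i (z i)).toReal) w :=
        hsum.localConvexExt_le fun z => EReal.add_ne_bot_iff.2 ⟨hf z, hΦ z⟩
    _ = linearCombination ℝ (fun z => (f z).toReal + (∑ i, φ i (z i)).toReal) w :=
        congrArg _ <| hw.linearCombination_congr fun z hz =>
          EReal.toReal_add hz.2 (hf z) (hdom hz.1) (hΦ z)
    _ = localConvexExt f u + localConvexExt (fun z => ∑ i, φ i (z i)) u := by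
        rw [linearCombination_fun_add, EReal.coe_add, hwf, hwΦ,
          (hw.mono Set.inter_subset_left).linearCombination_separable_eq
            (hw'.mono Set.inter_subset_left) hφ hdom]

end Separable

/-- **Convex envelope of the sum of an integrally convex function and a
separable convex function.**  If f is integrally convex and
Φ(x) = Σᵢ φᵢ(xᵢ) is separable convex, then the convex envelope of f + Φ is
the sum of the convex envelopes of f and Φ. -/
theorem convEnvelope_add_separable (n : ℕ)
    (f : (Fin n → ℤ) → EReal) (hnb : ∀ x, f x ≠ ⊥)
    (hf : IntegrallyConvexFn f)
    (φ : Fin n → ℤ → EReal)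
    (hφnb : ∀ i k, φ i k ≠ ⊥)
    (hφint : ∀ i (k l m : ℤ), k ≤ l → l ≤ m → φ i k ≠ ⊤ → φ i m ≠ ⊤ → φ i l ≠ ⊤)
    (hφconv : ∀ i (k : ℤ), (2 : EReal) * φ i k ≤ φ i (k - 1) + φ i (k + 1)) :
    ∀ u : Fin n → ℝ,
      convEnvelope (fun x => f x + ∑ i, φ i (x i)) u =
        convEnvelope f u + convEnvelope (fun x => ∑ i, φ i (x i)) u := by
  intro u
  have hφdisc i : IsDiscreteConvex (φ i) :=
    ⟨hφnb i, ⟨fun k hk m hm l hl => hφint i k l m hl.1 hl.2 hk hm⟩, hφconv i⟩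
  have hΦnb (z : Fin n → ℤ) : ∑ i, φ i (z i) ≠ ⊥ := sum_ereal_ne_bot fun i _ => hφnb i (z i)
  refine le_antisymm ?_ (convEnvelope_add_le f _ u)
  calc convEnvelope (fun x => f x + ∑ i, φ i (x i)) u
      ≤ localConvexExt (fun x => f x + ∑ i, φ i (x i)) u :=
        convEnvelope_le_localConvexExt (fun z => EReal.add_ne_bot_iff.2 ⟨hnb z, hΦnb z⟩) u
    _ ≤ localConvexExt f u + localConvexExt (fun x => ∑ i, φ i (x i)) u :=
        localConvexExt_add_separable_le hnb hφnb u
    _ = convEnvelope f u + convEnvelope (fun x => ∑ i, φ i (x i)) u := by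
        rw [hf.localMidpointConvex.convEnvelope_eq hnb,
          (localMidpointConvex_separable hφdisc).convEnvelope_eq hΦnb]
end

section
/- If S ⊆ ℤⁿ is an integrally convex set, then its convex hull is a box-integer polyhedron; conversely, if P ⊆ ℝⁿ is a box-integer polyhedron, then S = P ∩ ℤⁿ is an integrally convex set. -/
open scoped BigOperators

/-- Coercion of an integer point to a real point. -/
def castR {n : ℕ} (z : Fin n → ℤ) : Fin n → ℝ := fun i => (z i : ℝ)

/-- A nonempty S ⊆ ℤⁿ is *integrally convex* if every real point of its
convex hull lies in the convex hull of S ∩ N(u). -/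
def IntegrallyConvexSet {n : ℕ} (S : Set (Fin n → ℤ)) : Prop :=
  S.Nonempty ∧ ∀ u : Fin n → ℝ, u ∈ convexHull ℝ (castR '' S) →
    u ∈ convexHull ℝ (castR '' (S ∩ intNbhd u))

/-- P ⊆ ℝⁿ is a polyhedron: a finite intersection of closed half-spaces. -/
def IsPolyhedron {n : ℕ} (P : Set (Fin n → ℝ)) : Prop :=
  ∃ (m : ℕ) (A : Fin m → Fin n → ℝ) (b : Fin m → ℝ),
    P = {x | ∀ i, (∑ j, A i j * x j) ≤ b i}

/-- A (bounded) set is an integer polytope when it is the convex hull of its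
integer points (equivalently, all its vertices are integral). -/
def IsIntegerPolytope {n : ℕ} (Q : Set (Fin n → ℝ)) : Prop :=
  Q = convexHull ℝ (castR '' {z : Fin n → ℤ | castR z ∈ Q})

/-- A polyhedron P is *box-integer* if its intersection with every integer
box [a, b] is an integer polytope. -/
def IsBoxIntegerPolyhedron {n : ℕ} (P : Set (Fin n → ℝ)) : Prop :=
  IsPolyhedron P ∧ ∀ a b : Fin n → ℤ,
    IsIntegerPolytope (P ∩ {x | ∀ i, (a i : ℝ) ≤ x i ∧ x i ≤ (b i : ℝ)})

/-!
Let `C` be the convex hull of an integrally convex set `S`. The cone `K u` of feasible directions of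
`C` at `u` depends only on `C` near `u`, hence only on the part of `C` in an integer box of width at
most two around `u`, where `C` is the convex hull of finitely many points of `S`. This cone is
therefore generated by integer vectors with entries in `[-2, 2]`, so only finitely many cones occur
as `u` varies. The closed convex set `C` is the intersection of its translated feasible cones
`u + K u`, and one apex `u` per cone suffices: if `K z = K u`, then `u - z ∈ K z`, so
`u + K u ⊆ z + K z`. By Weyl's theorem each cone is a finite intersection of half-spaces.

Both directions also use that the integer points of the box `[⌊u⌋, ⌈u⌉]` are exactly the integral
neighborhood of `u`.
-/

open Set Topology
open scoped Pointwise

section FourierMotzkin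

variable {𝕜 : Type*} [Field 𝕜] [LinearOrder 𝕜] [IsStrictOrderedRing 𝕜]

theorem exists_nonneg_forall_mul_le_iff {ι : Type*} (s : Finset ι) (a b : ι → 𝕜) :
    (∃ t, 0 ≤ t ∧ ∀ i ∈ s, t * a i ≤ b i) ↔
      (∀ i ∈ s, 0 ≤ a i → 0 ≤ b i) ∧
        ∀ i ∈ s, ∀ j ∈ s, 0 < a i → a j < 0 → 0 ≤ a i * b j - a j * b i := by
  classical
  constructor
  · rintro ⟨t, ht, h⟩
    refine ⟨fun i hi hai => (mul_nonneg ht hai).trans (h i hi), fun i hi j hj hai haj => ?_⟩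
    have upper := mul_le_mul_of_nonpos_left (h i hi) haj.le
    have lower := mul_le_mul_of_nonneg_left (h j hj) hai.le
    linarith
  · rintro ⟨hnonneg, hcross⟩
    obtain ⟨t, ht, htmax⟩ := (insert 0 ((s.filter (a · < 0)).image fun j => b j / a j))
      |>.exists_max_image id (Finset.insert_nonempty _ _)
    simp only [Finset.mem_insert, Finset.mem_image, Finset.mem_filter, forall_eq_or_imp, id,
      forall_exists_index, and_imp] at ht htmax
    refine ⟨t, htmax.1, fun i hi => ?_⟩
    rcases lt_trichotomy (a i) 0 with hai | hai | hai
    · exact (div_le_iff_of_neg hai).1 (htmax.2 _ i hi hai rfl)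
    · simpa [hai] using hnonneg i hi hai.ge
    · rcases ht with rfl | ⟨j, ⟨hj, haj⟩, rfl⟩
      · simpa using hnonneg i hi hai.le
      · rw [div_mul_eq_mul_div, div_le_iff_of_neg haj]
        linarith [hcross i hi j hj hai haj]

variable {M V : Type*} [AddCommGroup M] [Module 𝕜 M] [AddCommGroup V] [Module 𝕜 V]

theorem mem_dual_sup_hull_singleton {p : M →ₗ[𝕜] V →ₗ[𝕜] 𝕜} {s : Set M} {d x : V} :
    x ∈ PointedCone.dual p s ⊔ PointedCone.hull 𝕜 {d} ↔
      ∃ t, 0 ≤ t ∧ ∀ f ∈ s, t * p f d ≤ p f x := by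
  simp only [Submodule.mem_sup, Submodule.mem_span_singleton]
  constructor
  · rintro ⟨z, hz, _, ⟨t, rfl⟩, rfl⟩
    refine ⟨t, t.2, fun f hf => ?_⟩
    simpa [← Nonneg.coe_smul] using hz hf
  · rintro ⟨t, ht, h⟩
    refine ⟨x - t • d, fun f hf => ?_, t • d, ⟨⟨t, ht⟩, rfl⟩, sub_add_cancel x _⟩
    simpa using h f hf

/-- The functionals `p f d • g - p g d • f` vanish at `d`: they are the constraints left after
Fourier–Motzkin elimination of the coefficient of `d`. -/
theorem dual_sup_hull_singleton (p : M →ₗ[𝕜] V →ₗ[𝕜] 𝕜) (s : Finset M) (d : V) :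
    PointedCone.dual p s ⊔ PointedCone.hull 𝕜 {d} =
      PointedCone.dual p ({f | f ∈ s ∧ 0 ≤ p f d} ∪
        image2 (fun f g => p f d • g - p g d • f)
          {f | f ∈ s ∧ 0 < p f d} {g | g ∈ s ∧ p g d < 0}) := by
  ext x
  simp only [mem_dual_sup_hull_singleton, Finset.mem_coe, exists_nonneg_forall_mul_le_iff,
    PointedCone.dual_union, Submodule.mem_inf, PointedCone.mem_dual, forall_mem_image2,
    mem_ofPred_eq, and_imp, map_sub, map_smul, LinearMap.sub_apply, LinearMap.smul_apply,
    smul_eq_mul]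
  grind

theorem dualFG_sup_hull_singleton {p : M →ₗ[𝕜] V →ₗ[𝕜] 𝕜} {C : PointedCone 𝕜 V}
    (hC : C.DualFG p) (d : V) : (C ⊔ PointedCone.hull 𝕜 {d}).DualFG p := by
  obtain ⟨s, rfl⟩ := hC
  rw [dual_sup_hull_singleton]
  have finite_sep (q : M → Prop) : {f | f ∈ s ∧ q f}.Finite := s.finite_toSet.sep q
  exact .dual_of_finite p ((finite_sep _).union ((finite_sep _).image2 _ (finite_sep _)))

theorem dualFG_id_bot [FiniteDimensional 𝕜 V] : (⊥ : PointedCone 𝕜 V).DualFG .id := by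
  let b := Module.finBasis 𝕜 V
  have hbot : (⊥ : PointedCone 𝕜 V) = PointedCone.dual .id (range b.coord ∪ -range b.coord) := by
    ext x
    have h0 : x = 0 ↔ ∀ i, 0 ≤ b.coord i x ∧ 0 ≤ -b.coord i x := by
      simp only [← b.forall_coord_eq_zero_iff, neg_nonneg, le_antisymm_iff, and_comm]
    simpa [PointedCone.dual_union, forall_and] using h0
  rw [hbot]
  exact .dual_of_finite _ ((finite_range _).union (finite_range _).neg)

/-- Weyl's half of the Minkowski–Weyl theorem. -/
theorem dualFG_id_of_fg [FiniteDimensional 𝕜 V] {C : PointedCone 𝕜 V} (hC : C.FG) :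
    C.DualFG .id := by
  classical
  obtain ⟨s, rfl⟩ := hC
  induction s using Finset.induction_on with
  | empty => simpa using dualFG_id_bot
  | insert d s _ ih =>
    rw [Finset.coe_insert, Submodule.span_insert, sup_comm]
    exact dualFG_sup_hull_singleton ih d

end FourierMotzkin

section FeasibleCone

variable {𝕜 E : Type*} [Field 𝕜] [LinearOrder 𝕜] [IsStrictOrderedRing 𝕜] [AddCommGroup E]
  [Module 𝕜 E] {C V : Set E} {d u x : E}

variable (𝕜) in
/-- The cone of feasible directions of `C` at `u`, without taking the closure. It is encoded as the
cone generated by `C - u`; for convex `C` containing `u` this is the usual notion, see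
`mem_feasibleCone_iff`. -/
def feasibleCone (C : Set E) (u : E) : PointedCone 𝕜 E :=
  PointedCone.hull 𝕜 ((· - u) '' C)

theorem sub_mem_feasibleCone (hx : x ∈ C) : x - u ∈ feasibleCone 𝕜 C u :=
  PointedCone.subset_hull (mem_image_of_mem _ hx)

theorem mem_feasibleCone_of_add_smul_mem {ε : 𝕜} (hε : 0 < ε) (h : u + ε • d ∈ C) :
    d ∈ feasibleCone 𝕜 C u := by
  rw [← PointedCone.smul_mem_iff (feasibleCone 𝕜 C u) hε]
  simpa using sub_mem_feasibleCone (𝕜 := 𝕜) (u := u) h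

theorem mem_feasibleCone_iff (hC : Convex 𝕜 C) (hu : u ∈ C) :
    d ∈ feasibleCone 𝕜 C u ↔ ∃ ε : 𝕜, 0 < ε ∧ u + ε • d ∈ C := by
  refine ⟨fun hd => ?_, fun ⟨ε, hε, h⟩ => mem_feasibleCone_of_add_smul_mem hε h⟩
  have hconv : Convex 𝕜 ((· - u) '' C) := by
    simpa only [sub_eq_neg_add] using hC.translate (-u)
  have hpointed : (ConvexCone.hull 𝕜 ((· - u) '' C)).Pointed :=
    ConvexCone.subset_hull ⟨u, hu, sub_self u⟩
  have hle : feasibleCone 𝕜 C u ≤ (ConvexCone.hull 𝕜 ((· - u) '' C)).toPointedCone hpointed :=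
    Submodule.span_le.2 ConvexCone.subset_hull
  obtain ⟨r, hr, _, ⟨c, hc, rfl⟩, rfl⟩ := (ConvexCone.mem_hull_of_convex hconv).1 (hle hd)
  refine ⟨r⁻¹, inv_pos.2 hr, ?_⟩
  simpa [smul_smul, inv_mul_cancel₀ hr.ne'] using hc

theorem add_smul_mem_of_le {δ ε : 𝕜} (hC : Convex 𝕜 C) (hu : u ∈ C) (hmem : u + ε • d ∈ C)
    (hδ : 0 < δ) (hδε : δ ≤ ε) : u + δ • d ∈ C := by
  have hε : 0 < ε := hδ.trans_le hδε
  have hscaled := hC.add_smul_mem hu hmem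
    (t := δ / ε) ⟨(div_pos hδ hε).le, (div_le_one hε).2 hδε⟩
  rwa [smul_smul, div_mul_cancel₀ _ hε.ne'] at hscaled

theorem sub_notMem_feasibleCone_of_isVisible (hC : Convex 𝕜 C) (hu : u ∈ C) (hx : x ∉ C)
    (hvis : IsVisible 𝕜 C x u) : x - u ∉ feasibleCone 𝕜 C u := by
  rw [mem_feasibleCone_iff hC hu]
  rintro ⟨ε, hε, hmem⟩
  obtain ⟨δ, hδ0, hδ⟩ := exists_between (lt_min hε one_pos)
  obtain ⟨hδε, hδ1⟩ := lt_min_iff.1 hδ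
  refine (isVisible_iff_lineMap (ne_of_mem_of_not_mem hu hx)).1 hvis.symm δ ⟨hδ0, hδ1⟩ ?_
  rw [AffineMap.lineMap_apply, vsub_eq_sub, vadd_eq_add, add_comm]
  exact add_smul_mem_of_le hC hu hmem hδ0 hδε.le

theorem sum_smul_add_smul_sub_mem_convexHull {ι : Type*} [Fintype ι] {l : ι → 𝕜} {v : ι → E}
    {w : E} (hl0 : ∀ i, 0 ≤ l i) (hl1 : ∑ i, l i = 1) (hv : ∀ i, v i ∈ V) (hw : w ∈ V) (i : ι) :
    ∑ j, l j • v j + l i • (w - v i) ∈ convexHull 𝕜 V := by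
  classical
  have hupdate : ∑ j, l j • Function.update v i w j = ∑ j, l j • v j + l i • (w - v i) := by
    rw [← sub_eq_iff_eq_add', ← Finset.sum_sub_distrib, Fintype.sum_eq_single i fun j hj => ?_]
    · rw [Function.update_self, smul_sub]
    · rw [Function.update_of_ne hj, sub_self]
  have hmem (j : ι) : Function.update v i w j ∈ V := by
    rcases eq_or_ne j i with rfl | hj
    · rwa [Function.update_self]
    · rw [Function.update_of_ne hj]
      exact hv j
  rw [← hupdate]
  exact (convex_convexHull 𝕜 V).sum_mem (fun j _ => hl0 j) hl1
    fun j _ => subset_convexHull 𝕜 V (hmem j)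

theorem feasibleCone_convexHull_eq_hull_sub (hu : u ∈ convexHull 𝕜 V) :
    feasibleCone 𝕜 (convexHull 𝕜 V) u =
      PointedCone.hull 𝕜 {d ∈ V - V | d ∈ feasibleCone 𝕜 (convexHull 𝕜 V) u} := by
  refine le_antisymm (Submodule.span_le.2 ?_) (Submodule.span_le.2 fun d hd => hd.2)
  set K := PointedCone.hull 𝕜 {d ∈ V - V | d ∈ feasibleCone 𝕜 (convexHull 𝕜 V) u}
  obtain ⟨ι, _, l, v, hl0, hl1, hv, rfl⟩ := mem_convexHull_iff_exists_fintype.1 hu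
  set u := ∑ i, l i • v i
  -- Exchanging `v i` for `w` moves `u` by `l i • (w - v i)`, and these moves add up to `w - u`.
  have sub_mem_of_mem (w : E) (hw : w ∈ V) : w - u ∈ K := by
    have hsum : ∑ i, l i • (w - v i) = w - u := by
      simp only [smul_sub, Finset.sum_sub_distrib, ← Finset.sum_smul, hl1, one_smul, u]
    rw [← hsum]
    refine Submodule.sum_mem _ fun i _ => ?_
    rcases (hl0 i).eq_or_lt with hi | hi
    · simp only [← hi, zero_smul, Submodule.zero_mem]
    exact K.smul_mem (hl0 i) (PointedCone.subset_hull ⟨sub_mem_sub hw (hv i),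
      mem_feasibleCone_of_add_smul_mem hi
        (sum_smul_add_smul_sub_mem_convexHull hl0 hl1 hv hw i)⟩)
  have hconv : Convex 𝕜 ((· - u) ⁻¹' (K : Set E)) := by
    simpa only [sub_eq_add_neg] using (PointedCone.convex K).translate_preimage_left (-u)
  rintro _ ⟨y, hy, rfl⟩
  exact convexHull_min sub_mem_of_mem hconv hy

end FeasibleCone

section Topology

variable {E : Type*} [AddCommGroup E] [Module ℝ E] [TopologicalSpace E]
  [IsTopologicalAddGroup E] [ContinuousSMul ℝ E] {C N U : Set E} {u x : E}

theorem feasibleCone_inter_of_mem_nhds (hC : Convex ℝ C) (hu : u ∈ C) (hN : N ∈ 𝓝 u) :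
    feasibleCone ℝ (C ∩ N) u = feasibleCone ℝ C u := by
  refine le_antisymm (Submodule.span_mono (image_mono inter_subset_left)) fun d hd => ?_
  obtain ⟨ε, hε, hmem⟩ := (mem_feasibleCone_iff hC hu).1 hd
  have hlim : Filter.Tendsto (fun δ : ℝ => u + δ • d) (𝓝[>] 0) (𝓝 u) := by
    have hcont : Continuous fun δ : ℝ => u + δ • d := by fun_prop
    simpa only [zero_smul, add_zero] using (hcont.tendsto 0).mono_left nhdsWithin_le_nhds
  obtain ⟨δ, hδN, hδ0, hδε⟩ :=
    ((hlim.eventually hN).and (Ioo_mem_nhdsGT hε)).exists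
  exact mem_feasibleCone_of_add_smul_mem hδ0
    ⟨add_smul_mem_of_le hC hu hmem hδ0 hδε.le, hδN⟩

theorem mem_iff_forall_sub_mem_feasibleCone (hC : Convex ℝ C) (hclosed : IsClosed C)
    (hne : C.Nonempty) (hUC : U ⊆ C) (hU : feasibleCone ℝ C '' C ⊆ feasibleCone ℝ C '' U) :
    x ∈ C ↔ ∀ u ∈ U, x - u ∈ feasibleCone ℝ C u := by
  refine ⟨fun hx u _ => sub_mem_feasibleCone hx, fun hx => ?_⟩
  by_contra hxC
  obtain ⟨c, hc⟩ := hne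
  obtain ⟨z, hz, -, hvis⟩ := hclosed.exists_wbtw_isVisible hc x
  obtain ⟨u, hu, hcone⟩ := hU (mem_image_of_mem _ hz)
  refine sub_notMem_feasibleCone_of_isVisible hC hz hxC hvis ?_
  rw [← sub_add_sub_cancel x u z]
  exact add_mem (hcone ▸ hx u hu) (sub_mem_feasibleCone (hUC hu))

theorem isClosed_of_forall_exists_mem_nhds {X : Type*} [TopologicalSpace X] {s : Set X}
    (h : ∀ x, ∃ t ∈ 𝓝 x, IsClosed (s ∩ t)) : IsClosed s := by
  refine isClosed_of_closure_subset fun x hx => ?_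
  obtain ⟨t, ht, hclosed⟩ := h x
  refine (hclosed.closure_subset ?_).1
  rw [mem_closure_iff_nhdsWithin_neBot] at hx ⊢
  rwa [nhdsWithin_inter_of_mem' (mem_nhdsWithin_of_mem_nhds ht)]

end Topology

section Polyhedron

variable {n : ℕ}

theorem isPolyhedron_setOf_forall_le {ι : Type*} [Finite ι]
    (f : ι → Module.Dual ℝ (Fin n → ℝ)) (b : ι → ℝ) : IsPolyhedron {x | ∀ i, f i x ≤ b i} := by
  obtain ⟨m, ⟨e⟩⟩ := Finite.exists_equiv_fin ι
  let A (i : ι) : Fin n → ℝ := (dotProductEquiv ℝ (Fin n)).symm (f i)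
  refine ⟨m, A ∘ e.symm, b ∘ e.symm, ?_⟩
  have hA (i : ι) (x : Fin n → ℝ) : ∑ j, A i j * x j = f i x :=
    LinearMap.congr_fun ((dotProductEquiv ℝ (Fin n)).apply_symm_apply (f i)) x
  simp only [Function.comp_apply, hA, e.forall_congr_left]

theorem IsPolyhedron.convex {P : Set (Fin n → ℝ)} (hP : IsPolyhedron P) : Convex ℝ P := by
  obtain ⟨m, A, b, rfl⟩ := hP
  rw [ofPred_forall]
  exact convex_iInter fun i => convex_halfSpace_le (dotProductBilin ℝ ℝ (A i)).isLinear (b i)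

theorem isPolyhedron_of_finite_feasibleCone {C : Set (Fin n → ℝ)} (hC : Convex ℝ C)
    (hclosed : IsClosed C) (hne : C.Nonempty) (hfg : ∀ u ∈ C, (feasibleCone ℝ C u).FG)
    (hfin : (feasibleCone ℝ C '' C).Finite) : IsPolyhedron C := by
  obtain ⟨U, hUC, hUfin, hU⟩ := exists_subset_image_finite_and.1 ⟨_, Subset.rfl, hfin, Subset.rfl⟩
  choose! F hF using fun u hu => dualFG_id_of_fg (hfg u hu)
  have := hUfin.to_subtype
  have mem_feasibleCone_iff_forall (u : Fin n → ℝ) (hu : u ∈ U) (x : Fin n → ℝ) :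
      x - u ∈ feasibleCone ℝ C u ↔ ∀ f ∈ F u, f u ≤ f x := by
    simp only [← hF u (hUC hu), PointedCone.mem_dual, Finset.mem_coe, LinearMap.id_apply,
      map_sub, sub_nonneg]
  have hC_eq : C = {x | ∀ i : Σ u : U, F u, (-i.2.1) x ≤ (-i.2.1) i.1} := by
    ext x
    rw [mem_iff_forall_sub_mem_feasibleCone hC hclosed hne hUC hU]
    simp +contextual only [mem_ofPred_eq, Sigma.forall, Subtype.forall, LinearMap.neg_apply,
      neg_le_neg_iff, mem_feasibleCone_iff_forall]
  rw [hC_eq]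
  exact isPolyhedron_setOf_forall_le _ _

end Polyhedron

section IntegralConvexity

variable {n : ℕ} {S : Set (Fin n → ℤ)} {a b z w : Fin n → ℤ} {u : Fin n → ℝ}

theorem castR_sub (z w : Fin n → ℤ) : castR (z - w) = castR z - castR w :=
  funext fun i => Int.cast_sub (z i) (w i)

theorem castR_le_castR : castR z ≤ castR w ↔ z ≤ w :=
  forall_congr' fun _ => Int.cast_le

theorem castR_mem_Icc : castR z ∈ Icc (castR a) (castR b) ↔ z ∈ Icc a b :=
  and_congr castR_le_castR castR_le_castR

theorem setOf_forall_le_and_le_eq_Icc (a b : Fin n → ℤ) :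
    {x : Fin n → ℝ | ∀ i, (a i : ℝ) ≤ x i ∧ x i ≤ (b i : ℝ)} = Icc (castR a) (castR b) :=
  ext fun _ => forall_and

theorem intNbhd_eq_Icc (u : Fin n → ℝ) :
    intNbhd u = Icc (fun i => ⌊u i⌋) (fun i => ⌈u i⌉) := by
  ext z
  have habs (i : Fin n) : |u i - z i| < 1 ↔ ⌊u i⌋ ≤ z i ∧ z i ≤ ⌈u i⌉ := by
    rw [abs_sub_lt_iff, ← Int.lt_add_one_iff, Int.floor_lt, ← Int.sub_one_lt_iff, Int.lt_ceil,
      sub_lt_iff_lt_add', sub_lt_comm]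
    push_cast
    rfl
  simp only [intNbhd, mem_ofPred_eq, habs, mem_Icc, Pi.le_def, forall_and]

theorem exists_Icc_castR_mem_nhds (u : Fin n → ℝ) :
    ∃ a b : Fin n → ℤ, b - a ≤ 2 ∧ Icc (castR a) (castR b) ∈ 𝓝 u := by
  refine ⟨fun i => ⌈u i⌉ - 1, fun i => ⌊u i⌋ + 1, fun i => ?_, pi_Icc_mem_nhds ?_ ?_⟩
  · have := Int.floor_le_ceil (u i)
    simp only [Pi.sub_apply, Pi.ofNat_apply]
    lia
  · intro i
    simpa [castR, sub_lt_iff_lt_add] using Int.ceil_lt_add_one (u i)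
  · intro i
    simp [castR]

theorem isIntegerPolytope_convexHull (S : Set (Fin n → ℤ)) :
    IsIntegerPolytope (convexHull ℝ (castR '' S)) := by
  refine Subset.antisymm (convexHull_mono (image_mono fun z hz => ?_))
    (convexHull_min (image_subset_iff.2 fun z hz => hz) (convex_convexHull ℝ _))
  exact subset_convexHull ℝ _ (mem_image_of_mem castR hz)

theorem IntegrallyConvexSet.convexHull_inter_Icc (hS : IntegrallyConvexSet S)
    (a b : Fin n → ℤ) :
    convexHull ℝ (castR '' S) ∩ Icc (castR a) (castR b) =
      convexHull ℝ (castR '' (S ∩ Icc a b)) := by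
  refine Subset.antisymm (fun u ⟨hu, hau, hub⟩ => ?_) (subset_inter ?_ ?_)
  · refine convexHull_mono (image_mono (inter_subset_inter_right S ?_)) (hS.2 u hu)
    rw [intNbhd_eq_Icc]
    exact Icc_subset_Icc (fun i => Int.le_floor.2 (hau i)) fun i => Int.ceil_le.2 (hub i)
  · exact convexHull_mono (image_mono inter_subset_left)
  · exact convexHull_min (image_subset_iff.2 fun z hz => castR_mem_Icc.2 hz.2)
      (convex_Icc _ _)

theorem IntegrallyConvexSet.isClosed_convexHull (hS : IntegrallyConvexSet S) :
    IsClosed (convexHull ℝ (castR '' S)) := by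
  refine isClosed_of_forall_exists_mem_nhds fun u => ?_
  obtain ⟨a, b, -, hab⟩ := exists_Icc_castR_mem_nhds u
  refine ⟨_, hab, ?_⟩
  rw [hS.convexHull_inter_Icc]
  have hfin : (castR '' (S ∩ Icc a b)).Finite := ((finite_Icc a b).inter_of_right S).image castR
  exact (hfin.isCompact_convexHull ℝ).isClosed

theorem IntegrallyConvexSet.feasibleCone_convexHull_eq_hull (hS : IntegrallyConvexSet S)
    (hu : u ∈ convexHull ℝ (castR '' S)) :
    feasibleCone ℝ (convexHull ℝ (castR '' S)) u = PointedCone.hull ℝ (castR ''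
      {g ∈ Icc (-2) 2 | castR g ∈ feasibleCone ℝ (convexHull ℝ (castR '' S)) u}) := by
  obtain ⟨a, b, hba, hnhds⟩ := exists_Icc_castR_mem_nhds u
  set C := convexHull ℝ (castR '' S)
  set V := castR '' (S ∩ Icc a b)
  have hCV : feasibleCone ℝ (convexHull ℝ V) u = feasibleCone ℝ C u := by
    rw [← hS.convexHull_inter_Icc,
      feasibleCone_inter_of_mem_nhds (convex_convexHull ℝ _) hu hnhds]
  have huV : u ∈ convexHull ℝ V :=
    hS.convexHull_inter_Icc a b ▸ ⟨hu, mem_of_mem_nhds hnhds⟩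
  have hsub : feasibleCone ℝ C u = PointedCone.hull ℝ {d ∈ V - V | d ∈ feasibleCone ℝ C u} :=
    hCV ▸ feasibleCone_convexHull_eq_hull_sub huV
  refine le_antisymm (hsub.trans_le (Submodule.span_mono ?_))
    (Submodule.span_le.2 (image_subset_iff.2 fun g hg => hg.2))
  rintro d ⟨hd, hdC⟩
  obtain ⟨_, ⟨z, ⟨-, hz⟩, rfl⟩, _, ⟨w, ⟨-, hw⟩, rfl⟩, rfl⟩ := mem_sub.1 hd
  rw [← castR_sub] at hdC ⊢
  refine mem_image_of_mem castR ⟨⟨?_, ?_⟩, hdC⟩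
  · exact (neg_le_neg hba).trans (neg_sub b a ▸ sub_le_sub hz.1 hw.2)
  · exact (sub_le_sub hz.2 hw.1).trans hba

theorem IntegrallyConvexSet.isPolyhedron_convexHull (hS : IntegrallyConvexSet S) :
    IsPolyhedron (convexHull ℝ (castR '' S)) := by
  have hbox : (Icc (-2) 2 : Set (Fin n → ℤ)).Finite := finite_Icc _ _
  refine isPolyhedron_of_finite_feasibleCone (convex_convexHull ℝ _) hS.isClosed_convexHull
    (hS.1.image castR).convexHull (fun u hu => ?_) ?_
  · rw [hS.feasibleCone_convexHull_eq_hull hu]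
    exact Submodule.fg_span ((hbox.sep _).image castR)
  · refine (hbox.finite_subsets.image fun G => PointedCone.hull ℝ (castR '' G)).subset ?_
    rintro _ ⟨u, hu, rfl⟩
    exact ⟨_, sep_subset _ _, (hS.feasibleCone_convexHull_eq_hull hu).symm⟩

theorem IntegrallyConvexSet.isBoxIntegerPolyhedron_convexHull (hS : IntegrallyConvexSet S) :
    IsBoxIntegerPolyhedron (convexHull ℝ (castR '' S)) := by
  refine ⟨hS.isPolyhedron_convexHull, fun a b => ?_⟩
  rw [setOf_forall_le_and_le_eq_Icc, hS.convexHull_inter_Icc]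
  exact isIntegerPolytope_convexHull _

theorem IsBoxIntegerPolyhedron.mem_convexHull_inter_intNbhd {P : Set (Fin n → ℝ)}
    (hP : IsBoxIntegerPolyhedron P) (hu : u ∈ P) :
    u ∈ convexHull ℝ (castR '' ({z | castR z ∈ P} ∩ intNbhd u)) := by
  have hbox := hP.2 (fun i => ⌊u i⌋) (fun i => ⌈u i⌉)
  rw [setOf_forall_le_and_le_eq_Icc] at hbox
  have hmem : u ∈ P ∩ Icc (castR fun i => ⌊u i⌋) (castR fun i => ⌈u i⌉) :=
    ⟨hu, fun i => Int.floor_le (u i), fun i => Int.le_ceil (u i)⟩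
  rw [hbox] at hmem
  refine convexHull_mono (image_mono ?_) hmem
  rintro z ⟨hzP, hz⟩
  exact ⟨hzP, intNbhd_eq_Icc u ▸ castR_mem_Icc.1 hz⟩

theorem IsBoxIntegerPolyhedron.integrallyConvexSet {P : Set (Fin n → ℝ)}
    (hP : IsBoxIntegerPolyhedron P) (hne : P.Nonempty) :
    IntegrallyConvexSet {z : Fin n → ℤ | castR z ∈ P} := by
  refine ⟨?_, fun u hu => hP.mem_convexHull_inter_intNbhd ?_⟩
  · obtain ⟨u, hu⟩ := hne
    have hconv := convexHull_nonempty_iff.1 ⟨u, hP.mem_convexHull_inter_intNbhd hu⟩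
    exact hconv.of_image.left
  · exact convexHull_min (image_subset_iff.2 fun z hz => hz) hP.1.convex hu

end IntegralConvexity

/-- **Integrally convex sets and box-integer polyhedra.**
If S ⊆ ℤⁿ is integrally convex then conv(S) is a box-integer polyhedron;
conversely, if P is a nonempty box-integer polyhedron then P ∩ ℤⁿ is an
integrally convex set. -/
theorem integrallyConvexSet_iff_boxInteger (n : ℕ) :
    (∀ S : Set (Fin n → ℤ), IntegrallyConvexSet S →
      IsBoxIntegerPolyhedron (convexHull ℝ (castR '' S))) ∧
    (∀ P : Set (Fin n → ℝ), IsBoxIntegerPolyhedron P → P.Nonempty →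
      IntegrallyConvexSet {z : Fin n → ℤ | castR z ∈ P}) :=
  ⟨fun _ hS => hS.isBoxIntegerPolyhedron_convexHull, fun _ hP hne => hP.integrallyConvexSet hne⟩
end
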